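/- There exists an absolute constant c > 0 such that for all d, D, W ∈ ℕ⁺ with d ≤ W, the class of all functions f : ℝ^d → ℝ implemented by a neural network of depth D and width W whose activation functions all belong to {ReLU, ReLU², ReLU³} has pseudo-dimension at most c · D² W² (D + log W). -/

import Mathlib

/-!
A set of `n` inputs that is pseudo-shattered by the networks forces `2 ^ n` distinct output patterns
as the parameters vary, so it suffices to bound the number of patterns.

All networks are first embedded into one family with exactly `W` units per layer, whose parameter
vector has `p = D W (W + 4)` real entries (`ImplementedBy.exists_param`). For fixed inputs the
parameter space splits layer by layer into pieces on which all unit outputs are polynomials in the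
parameters: passing a layer means fixing the signs of at most `n W` polynomials of degree at most
`2 * 3 ^ D` on every existing piece (`piecewisePoly_layerState`). Hence `2 ^ n ≤ B ^ D`, where `B`
bounds the number of sign patterns of these polynomials, and `log B = O(p (D + log W + log n))`
yields the claim (`numeric_bound`).

The bound on sign patterns (`card_signPattern`) is of Warren's type: `m` polynomials `Q i` of degree
at most `k` in `p` variables have at most `(p (m k + 2) + 1) ^ p` sign patterns. For its proof, let `F` be
the product of all `Q i` (perturbed to be nonzero at the chosen representatives) and `R - |x|²`.
In each sign cell `|F|` is positive inside and zero on the boundary, so for every small vector `y` the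
tilted function `F - ⟨y, ·⟩` has a critical point in each cell: the system `∇F = y` has at least as
many solutions as there are cells (`exists_critical_in_cell`). On the other hand, a linear form `l` and
the partial derivatives of `F` are `p + 1` polynomials in `p` variables, and are algebraically
dependent with a relation of controlled degree by a dimension count. For generic `y` the relation
leaves few values of `l` on the solutions (`exists_eliminant`), and `l` can be chosen to separate them
(`card_le_of_solutions`). Since solutions exist for every small `y`, no nondegeneracy is needed.
-/

open scoped ENNReal

/-- `ReLUpow k` is the function `x ↦ (max x 0)^k`; `ReLUpow 1 = ReLU`,
`ReLUpow 2 = ReLU²`, `ReLUpow 3 = ReLU³`. -/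
noncomputable def ReLUpow (k : ℕ) : ℝ → ℝ := fun x => max x 0 ^ k

/-- Evaluation of the layers of a fully connected network with layer widths `n ℓ`,
weight matrices `A ℓ`, biases `b ℓ` and unit-wise activation functions `ρ ℓ i`
(producing layer `ℓ+1` from layer `ℓ`). -/
def evalNN (n : ℕ → ℕ)
    (A : ∀ ℓ : ℕ, Matrix (Fin (n (ℓ + 1))) (Fin (n ℓ)) ℝ)
    (b : ∀ ℓ : ℕ, Fin (n (ℓ + 1)) → ℝ)
    (ρ : ∀ ℓ : ℕ, Fin (n (ℓ + 1)) → ℝ → ℝ)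
    (x : Fin (n 0) → ℝ) : (ℓ : ℕ) → Fin (n ℓ) → ℝ
  | 0 => x
  | (ℓ + 1) => fun i => ρ ℓ i ((A ℓ).mulVec (evalNN n A b ρ x ℓ) i + b ℓ i)

/-- `ImplementedBy d f D W Φ`: the function `f : ℝ^d → ℝ` is implemented by a neural
network of depth `D` and width `W` whose (hidden-layer, unit-wise) activation functions
all belong to `Φ`; the output layer is affine (activation `id`). -/
def ImplementedBy (d : ℕ) (f : (Fin d → ℝ) → ℝ) (D W : ℕ) (Φ : Set (ℝ → ℝ)) : Prop :=
  ∃ (n : ℕ → ℕ) (h0 : n 0 = d) (hD : n D = 1),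
    (∀ ℓ ≤ D, n ℓ ≤ W) ∧
    ∃ (A : ∀ ℓ : ℕ, Matrix (Fin (n (ℓ + 1))) (Fin (n ℓ)) ℝ)
      (b : ∀ ℓ : ℕ, Fin (n (ℓ + 1)) → ℝ)
      (ρ : ∀ ℓ : ℕ, Fin (n (ℓ + 1)) → ℝ → ℝ),
      (∀ ℓ, ℓ + 1 < D → ∀ i, ρ ℓ i ∈ Φ) ∧
      (∀ ℓ, ℓ + 1 = D → ∀ i, ρ ℓ i = id) ∧
      (∀ x : Fin d → ℝ,
        f x = evalNN n A b ρ (fun j => x (Fin.cast h0 j)) D (Fin.cast hD.symm 0))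

/-- A finite set `s` is pseudo-shattered by the class `F`: there are witnesses `y x`
such that every boolean pattern `b` on `s` is realized as the pattern of
`sign (u x - y x)` (i.e. `u x ≥ y x ↔ b x`) for some `u ∈ F`. -/
def PseudoShatters {X : Type*} (F : Set (X → ℝ)) (s : Finset X) : Prop :=
  ∃ y : X → ℝ, ∀ b : X → Bool, ∃ u ∈ F, ∀ x ∈ s, (y x ≤ u x ↔ b x = true)

/-- The pseudo-dimension of `F`: the supremum (in `ℕ∞`) of the cardinalities of the
finite sets pseudo-shattered by `F`. -/
noncomputable def pdim {X : Type*} (F : Set (X → ℝ)) : ℕ∞ :=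
  ⨆ s ∈ {s : Finset X | PseudoShatters F s}, (s.card : ℕ∞)

/-! ### Elimination and a crude Bezout bound -/

open MvPolynomial in
/-- Dimension count: polynomials of total degree at most `M` in `p` variables span a space of
dimension at most `(M + 1) ^ p`, so a longer family is linearly dependent. -/
lemma exists_relation {τ κ : Type*} [Fintype τ] [Fintype κ] (h : κ → MvPolynomial τ ℝ) (M : ℕ)
    (hM : ∀ k, (h k).totalDegree ≤ M) (hcard : (M + 1) ^ Fintype.card τ < Fintype.card κ) :
    ∃ c : κ → ℝ, c ≠ 0 ∧ ∑ k, c k • h k = 0 := by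
  classical
  let Φ : (κ → ℝ) →ₗ[ℝ] ((τ → Fin (M + 1)) → ℝ) :=
    LinearMap.pi fun m => (lcoeff ℝ (Finsupp.equivFunOnFinite.symm fun i => (m i : ℕ))) ∘ₗ
      (Fintype.linearCombination ℝ h)
  have hker : LinearMap.ker Φ ≠ ⊥ := by
    apply LinearMap.ker_ne_bot_of_finrank_lt
    simpa using hcard
  obtain ⟨c, hc, hc0⟩ := (Submodule.ne_bot_iff _).1 hker
  refine ⟨c, hc0, ?_⟩
  have hdeg : (∑ k, c k • h k).totalDegree ≤ M :=
    totalDegree_finsetSum_le fun k _ => (totalDegree_smul_le _ _).trans (hM k)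
  by_contra hne
  obtain ⟨m, hm⟩ := support_nonempty.2 hne
  have hle : ∀ i, m i < M + 1 := fun i =>
    Nat.lt_succ_of_le ((monomial_le_degreeOf i hm).trans ((degreeOf_le_totalDegree _ i).trans hdeg))
  have h1 := congrFun (LinearMap.mem_ker.1 hc) fun i => ⟨m i, hle i⟩
  have h2 : (Finsupp.equivFunOnFinite.symm fun i => m i) = m := by ext; simp
  rw [mem_support_iff] at hm
  apply hm
  simpa [Φ, Fintype.linearCombination_apply, h2, coeff_sum] using h1

open MvPolynomial in
/-- Elimination of variables by algebraic dependence. The `p + 1` polynomials `l, g₁, …, g_p` in `p`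
variables satisfy a nontrivial algebraic relation `G(l, g) = 0` whose degree in `l` is at most
`(p * K + 1) ^ p`. For `y` outside the zero set of one nonzero coefficient `q` of `G`, the univariate
polynomial `P = G(·, y)` is nonzero, and it vanishes at `l x` for every solution `x` of `g x = y`. -/
lemma exists_eliminant {τ : Type*} [Fintype τ] (g : τ → MvPolynomial τ ℝ) (K : ℕ)
    (hg : ∀ i, (g i).totalDegree ≤ K) (l : MvPolynomial τ ℝ) (hl : l.totalDegree ≤ 1) :
    ∃ q : MvPolynomial τ ℝ, q ≠ 0 ∧ ∀ y : τ → ℝ, eval y q ≠ 0 →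
      ∃ P : Polynomial ℝ, P ≠ 0 ∧ P.natDegree ≤ (Fintype.card τ * K + 1) ^ Fintype.card τ ∧
        ∀ x : τ → ℝ, (∀ i, eval x (g i) = y i) → P.eval (eval x l) = 0 := by
  classical
  set p := Fintype.card τ with hp
  set A := (p * K + 1) ^ p with hA
  -- Exponents of `l` and of every `g i` range over `0, …, A`: there are `(A + 1) ^ (p + 1)` products,
  -- of total degree at most `A + p * A * K`, and `A = (p * K + 1) ^ p` makes the count strict.
  obtain ⟨c, hc0, hc⟩ := exists_relation
    (κ := Fin (A + 1) × (τ → Fin (A + 1)))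
    (fun k => l ^ (k.1 : ℕ) * ∏ i, g i ^ (k.2 i : ℕ)) (A + p * (A * K))
    (fun k => by
      refine (totalDegree_mul _ _).trans (add_le_add ?_ ?_)
      · refine (totalDegree_pow _ _).trans ?_
        have := k.1.is_le
        nlinarith
      · refine (totalDegree_finsetProd _ _).trans ?_
        refine (Finset.sum_le_card_nsmul _ _ (A * K) fun i _ => ?_).trans (by simp [hp])
        exact (totalDegree_pow _ _).trans (Nat.mul_le_mul (k.2 i).is_le (hg i)))
    (by
      simp only [Fintype.card_prod, Fintype.card_fin, Fintype.card_fun, ← hp]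
      calc (A + p * (A * K) + 1) ^ p ≤ ((p * K + 1) * (A + 1)) ^ p :=
            Nat.pow_le_pow_left (by nlinarith [Nat.zero_le (p * K)]) _
        _ = A * (A + 1) ^ p := by rw [mul_pow]
        _ < (A + 1) * (A + 1) ^ p := Nat.mul_lt_mul_of_pos_right (by omega) (by positivity))
  obtain ⟨⟨a0, α0⟩, hne⟩ := Function.ne_iff.1 hc0
  let mon : (τ → Fin (A + 1)) → (τ →₀ ℕ) := fun α => Finsupp.equivFunOnFinite.symm fun i => (α i : ℕ)
  have hmon : Function.Injective mon := by
    intro α β h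
    ext i
    simpa [mon] using DFunLike.congr_fun h i
  let q : Fin (A + 1) → MvPolynomial τ ℝ := fun a => ∑ α, monomial (mon α) (c (a, α))
  have heval : ∀ a y, eval y (q a) = ∑ α, c (a, α) * ∏ i, y i ^ (α i : ℕ) := by
    intro a y
    simp [q, eval_monomial, mon, Finsupp.prod_fintype]
  refine ⟨q a0, ?_, fun y hy => ?_⟩
  · intro h
    have : coeff (mon α0) (q a0) = c (a0, α0) := by
      simp [q, coeff_sum, coeff_monomial, hmon.eq_iff]
    rw [h] at this
    exact hne (by simpa using this.symm)
  · refine ⟨∑ a : Fin (A + 1), Polynomial.monomial (a : ℕ) (eval y (q a)), ?_, ?_, ?_⟩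
    · intro h
      apply hy
      have : (∑ a : Fin (A + 1), Polynomial.monomial (a : ℕ) (eval y (q a))).coeff a0
          = eval y (q a0) := by
        simp [Polynomial.coeff_monomial, Fin.val_inj]
      rw [← this, h, Polynomial.coeff_zero]
    · refine Polynomial.natDegree_sum_le_of_forall_le _ _ fun a _ => ?_
      exact (Polynomial.natDegree_monomial_le _).trans a.is_le
    · intro x hx
      have := congrArg (eval x) hc
      simp only [map_sum, smul_eval, map_mul, map_pow, map_prod, hx, map_zero,
        Fintype.sum_prod_type] at this
      rw [← this, Polynomial.eval_finsetSum]
      refine Finset.sum_congr rfl fun a _ => ?_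
      rw [Polynomial.eval_monomial, heval, Finset.sum_mul]
      exact Finset.sum_congr rfl fun α _ => by ring

/-- Among the linear forms `x ↦ ∑ i, t ^ i * x i` with `t = 0, …, |J|² p`, one separates the given
`|J|` points: each pair of points is confused by at most `p` values of `t`. The list of forms depends
only on the number of points, not on the points. -/
lemma exists_separating {τ J : Type*} [Fintype τ] [Fintype J] (x : J → τ → ℝ)
    (hx : Function.Injective x) (e : τ ≃ Fin (Fintype.card τ)) :
    ∃ t : Fin (Fintype.card J * Fintype.card J * Fintype.card τ + 1),
      Function.Injective fun j => ∑ i, (t : ℝ) ^ (e i : ℕ) * x j i := by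
  classical
  let Δ : J × J → Polynomial ℝ := fun k =>
    if k.1 = k.2 then 1 else ∑ i, Polynomial.monomial (e i : ℕ) (x k.1 i - x k.2 i)
  have hne : ∀ k, Δ k ≠ 0 := by
    rintro ⟨j, k⟩
    by_cases h : j = k
    · simp [Δ, h]
    · obtain ⟨i, hi⟩ := Function.ne_iff.1 (hx.ne h)
      intro h0
      have : (Δ (j, k)).coeff (e i) = x j i - x k i := by
        simp [Δ, h, Polynomial.coeff_monomial, Fin.val_inj]
      rw [h0, Polynomial.coeff_zero] at this
      exact hi (by linarith)
  have hdeg : ∀ k, (Δ k).natDegree ≤ Fintype.card τ := by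
    rintro ⟨j, k⟩
    by_cases h : j = k
    · simp [Δ, h]
    · simp only [Δ, h, if_false]
      refine Polynomial.natDegree_sum_le_of_forall_le _ _ fun a _ => ?_
      exact (Polynomial.natDegree_monomial_le _).trans (e a).is_lt.le
  by_contra hcon
  push Not at hcon
  have h0 : ∏ k, Δ k = 0 := by
    refine Polynomial.eq_zero_of_natDegree_lt_card_of_eval_eq_zero (∏ k, Δ k)
      (f := fun t : Fin (Fintype.card J * Fintype.card J * Fintype.card τ + 1) => ((t : ℕ) : ℝ))
      (fun a b h => Fin.ext (Nat.cast_injective (R := ℝ) h)) (fun t => ?_) ?_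
    · obtain ⟨j, k, h, hjk⟩ := Function.not_injective_iff.1 (hcon t)
      rw [Polynomial.eval_prod]
      refine Finset.prod_eq_zero (Finset.mem_univ (j, k)) ?_
      simp only [Δ, hjk, if_false, Polynomial.eval_finsetSum, Polynomial.eval_monomial]
      have : ∑ i, (x j i - x k i) * (t : ℝ) ^ (e i : ℕ) =
          (∑ i, (t : ℝ) ^ (e i : ℕ) * x j i) - ∑ i, (t : ℝ) ^ (e i : ℕ) * x k i := by
        rw [← Finset.sum_sub_distrib]
        exact Finset.sum_congr rfl fun i _ => by ring
      rw [this]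
      exact sub_eq_zero.2 h
    · rw [Fintype.card_fin]
      refine Nat.lt_succ_of_le ((Polynomial.natDegree_prod_le _ _).trans ?_)
      refine (Finset.sum_le_card_nsmul _ _ _ fun k _ => hdeg k).trans ?_
      simp
  exact (Finset.prod_ne_zero_iff.2 fun k _ => hne k) h0

open MvPolynomial in
/-- A crude Bezout bound without any nondegeneracy: if the polynomial system `g x = y` has at least
`|J|` solutions for *every* small right-hand side `y`, then `|J| ≤ (p * K + 1) ^ p`. -/
lemma card_le_of_solutions {τ J : Type*} [Fintype τ] [Fintype J] (g : τ → MvPolynomial τ ℝ) (K : ℕ)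
    (hg : ∀ i, (g i).totalDegree ≤ K) (ε : ℝ) (hε : 0 < ε)
    (H : ∀ y : τ → ℝ, (∀ i, |y i| < ε) →
      ∃ x : J → τ → ℝ, Function.Injective x ∧ ∀ j i, eval (x j) (g i) = y i) :
    Fintype.card J ≤ (Fintype.card τ * K + 1) ^ Fintype.card τ := by
  classical
  let e := Fintype.equivFin τ
  let l : ℕ → MvPolynomial τ ℝ := fun t => ∑ i, C ((t : ℝ) ^ (e i : ℕ)) * X i
  have hl : ∀ t, (l t).totalDegree ≤ 1 := fun t =>
    totalDegree_finsetSum_le fun i _ => (totalDegree_mul _ _).trans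
      (by rw [totalDegree_C, totalDegree_X])
  choose q hq0 hq using fun t => exists_eliminant g K hg (l t) (hl t)
  -- The solutions depend on `y`, so `y` must be generic for all candidate separating forms at once.
  have hprod : ∏ t : Fin (Fintype.card J * Fintype.card J * Fintype.card τ + 1), q t ≠ 0 :=
    Finset.prod_ne_zero_iff.2 fun t _ => hq0 t
  obtain ⟨y, hy, hyq⟩ : ∃ y ∈ Set.pi Set.univ (fun _ : τ => Set.Ioo (-ε) ε), eval y
      (∏ t : Fin (Fintype.card J * Fintype.card J * Fintype.card τ + 1), q t) ≠ 0 := by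
    by_contra hcon
    push Not at hcon
    exact hprod (funext_set (fun _ : τ => Set.Ioo (-ε) ε)
      (fun _ => Set.Ioo_infinite (by linarith)) fun x hx => by rw [hcon x hx, map_zero])
  obtain ⟨x, hx, hxy⟩ := H y fun i => abs_lt.2 (hy i trivial)
  obtain ⟨t, ht⟩ := exists_separating x hx e
  rw [map_prod, Finset.prod_ne_zero_iff] at hyq
  obtain ⟨P, hP0, hPdeg, hP⟩ := hq t y (hyq t (Finset.mem_univ _))
  by_contra hcon
  push Not at hcon
  refine hP0 (Polynomial.eq_zero_of_natDegree_lt_card_of_eval_eq_zero P ht (fun j => ?_)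
    (hPdeg.trans_lt hcon))
  have := hP (x j) (hxy j)
  simpa [l] using this

/-! ### Critical points and sign patterns -/

open MvPolynomial in
lemma hasDerivAt_eval_update {τ : Type*} [DecidableEq τ] (F : MvPolynomial τ ℝ) (x : τ → ℝ)
    (i : τ) :
    HasDerivAt (fun t => eval (Function.update x i t) F) (eval x (pderiv i F)) (x i) := by
  induction F using MvPolynomial.induction_on with
  | C a => simpa using hasDerivAt_const (x i) a
  | add p q hp hq =>
    simp only [map_add]
    exact hp.add hq
  | mul_X p j hp =>
    have hX : HasDerivAt (fun t => Function.update x i t j)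
        (eval x (pderiv i (X j : MvPolynomial τ ℝ))) (x i) := by
      by_cases h : j = i
      · subst h
        simpa using hasDerivAt_id' (x j)
      · simpa [Function.update_of_ne h, pderiv_X_of_ne h] using hasDerivAt_const (x i) (x j)
    have := hp.mul hX
    simp only [Function.update_eq_self] at this
    simp only [pderiv_mul, map_add, map_mul, eval_X]
    exact this

open MvPolynomial in
lemma totalDegree_pderiv_le_totalDegree {τ : Type*} (F : MvPolynomial τ ℝ) (i : τ) :
    (pderiv i F).totalDegree ≤ F.totalDegree := by
  rw [totalDegree_eq, Finset.sup_le_iff]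
  intro m hm
  rw [mem_support_iff, coeff_pderiv] at hm
  have h := le_totalDegree (mem_support_iff.2 (left_ne_zero_of_mul hm))
  rw [Finsupp.card_toMultiset]
  rw [Finsupp.sum_add_index' (fun _ => rfl) (fun _ _ _ => rfl)] at h
  exact le_trans (Nat.le_add_right _ _) h

open MvPolynomial in
/-- At a local maximum of `a * (F z - ⟨y, z⟩)` with `a ≠ 0`, the gradient of `F` equals `y`. -/
lemma eval_pderiv_eq_of_isLocalMax {τ : Type*} [Fintype τ] (F : MvPolynomial τ ℝ) (x y : τ → ℝ)
    (a : ℝ) (ha : a ≠ 0)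
    (h : IsLocalMax (fun z : τ → ℝ => a * (eval z F - ∑ i, y i * z i)) x) (i : τ) :
    eval x (pderiv i F) = y i := by
  classical
  have h1 : HasDerivAt (fun t => a * (eval (Function.update x i t) F -
      ∑ j, y j * Function.update x i t j)) (a * (eval x (pderiv i F) - y i)) (x i) := by
    have := hasDerivAt_eval_update (C a * (F - ∑ j, C (y j) * X j)) x i
    simpa [pderiv_C_mul, pderiv_X, Pi.single_apply, apply_ite] using this
  have h2 : IsLocalMax (fun t => a * (eval (Function.update x i t) F -
      ∑ j, y j * Function.update x i t j)) (x i) := by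
    have hc : Filter.Tendsto (fun t => Function.update x i t) (nhds (x i)) (nhds x) := by
      have : Continuous fun t => Function.update x i t := by fun_prop
      simpa using this.tendsto (x i)
    have := hc.eventually h
    simpa [IsLocalMax, IsMaxFilter] using this
  have h3 := h2.hasDerivAt_eq_zero h1
  rcases mul_eq_zero.1 h3 with h4 | h4
  · exact absurd h4 ha
  · linarith

open MvPolynomial in
/-- Let `F = (R - |x|²) ∏ Q i`. The sign cell of `v` inside the ball `|x|² < R` contains a solution
of `∇F = y` for every sufficiently small `y`: on the closed cell `F v * F` is nonnegative and vanishes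
on the boundary, so the maximum of the slightly tilted function `F v * (F x - ⟨y, x⟩)` is attained
in the interior. -/
lemma exists_critical_in_cell {τ ι : Type*} [Fintype τ] [Fintype ι]
    (Q : ι → MvPolynomial τ ℝ) (R : ℝ) (hR : 1 ≤ R) (v : τ → ℝ)
    (hv : ∀ i, eval v (Q i) ≠ 0) (hvR : ∑ i, v i ^ 2 < R) (y : τ → ℝ)
    (F : MvPolynomial τ ℝ) (hF : F = (C R - ∑ i, X i ^ 2) * ∏ i, Q i)
    (hy : 2 * R * ∑ i, |y i| < |eval v F|) :
    ∃ x : τ → ℝ, (∀ i, 0 < eval v (Q i) * eval x (Q i)) ∧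
      ∀ i, eval x (pderiv i F) = y i := by
  classical
  have hFe : ∀ x, eval x F = (R - ∑ i, x i ^ 2) * ∏ i, eval x (Q i) := by
    intro x; simp [hF, map_prod]
  have hFv : eval v F ≠ 0 := by
    rw [hFe]
    exact mul_ne_zero (by linarith) (Finset.prod_ne_zero_iff.2 fun i _ => hv i)
  let K : Set (τ → ℝ) := {x | 0 ≤ R - ∑ i, x i ^ 2 ∧ ∀ i, 0 ≤ eval v (Q i) * eval x (Q i)}
  have hbound : ∀ x ∈ K, ∀ i, |x i| ≤ R := by
    intro x hx i
    have h1 : x i ^ 2 ≤ ∑ i, x i ^ 2 :=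
      Finset.single_le_sum (f := fun i => x i ^ 2) (fun i _ => sq_nonneg _) (Finset.mem_univ i)
    have h2 := hx.1
    apply abs_le_of_sq_le_sq <;> nlinarith
  have hvK : v ∈ K := ⟨by linarith, fun i => mul_self_nonneg _⟩
  have hKcl : IsClosed K := by
    have h2 : K = {x | 0 ≤ R - ∑ i, x i ^ 2} ∩ ⋂ i, {x | 0 ≤ eval v (Q i) * eval x (Q i)} := by
      ext x; simp [K]
    rw [h2]
    refine IsClosed.inter (isClosed_le continuous_const (by fun_prop)) (isClosed_iInter fun i =>
      isClosed_le continuous_const (continuous_const.mul (continuous_eval _)))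
  have hKc : IsCompact K := by
    refine IsCompact.of_isClosed_subset (isCompact_Icc (a := fun _ : τ => -R) (b := fun _ => R))
      hKcl fun x hx => ⟨fun i => (abs_le.1 (hbound x hx i)).1, fun i => (abs_le.1 (hbound x hx i)).2⟩
  obtain ⟨x, hxK, hmax⟩ := hKc.exists_isMaxOn ⟨v, hvK⟩
    (f := fun z : τ → ℝ => eval v F * (eval z F - ∑ i, y i * z i))
    (continuous_const.mul ((continuous_eval F).sub (by fun_prop))).continuousOn
  have hlin : ∀ z ∈ K, |∑ i, y i * z i| ≤ R * ∑ i, |y i| := by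
    intro z hz
    refine (Finset.abs_sum_le_sum_abs _ _).trans ?_
    rw [Finset.mul_sum]
    refine Finset.sum_le_sum fun i _ => ?_
    rw [abs_mul, mul_comm]
    exact mul_le_mul_of_nonneg_right (hbound z hz i) (abs_nonneg _)
  -- If `F x = 0`, comparing the values at `x` and `v` gives `|F v| ≤ |⟨y, v - x⟩|`, against `hy`.
  have hFx : eval x F ≠ 0 := by
    intro h0
    have h1 : eval v F * (eval v F - ∑ i, y i * v i) ≤ eval v F * (eval x F - ∑ i, y i * x i) :=
      hmax hvK
    rw [h0] at h1
    have h2 : |eval v F| * |eval v F| ≤ |eval v F| * (2 * R * ∑ i, |y i|) := by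
      calc |eval v F| * |eval v F| = eval v F * eval v F := abs_mul_abs_self _
        _ ≤ eval v F * (∑ i, y i * v i - ∑ i, y i * x i) := by linarith
        _ ≤ |eval v F| * |∑ i, y i * v i - ∑ i, y i * x i| := by
          rw [← abs_mul]; exact le_abs_self _
        _ ≤ _ := by
          refine mul_le_mul_of_nonneg_left ?_ (abs_nonneg _)
          refine (abs_sub _ _).trans ?_
          linarith [hlin v hvK, hlin x hxK]
    have := le_of_mul_le_mul_left h2 (abs_pos.2 hFv)
    linarith
  have hx0 : R - ∑ i, x i ^ 2 ≠ 0 ∧ ∀ i, eval x (Q i) ≠ 0 := by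
    rw [hFe] at hFx
    exact ⟨left_ne_zero_of_mul hFx, fun i =>
      Finset.prod_ne_zero_iff.1 (right_ne_zero_of_mul hFx) i (Finset.mem_univ i)⟩
  have hxpos : ∀ i, 0 < eval v (Q i) * eval x (Q i) := fun i =>
    lt_of_le_of_ne (hxK.2 i) (mul_ne_zero (hv i) (hx0.2 i)).symm
  have hKn : K ∈ nhds x := by
    have e1 : ∀ᶠ z in nhds x, 0 < R - ∑ i, z i ^ 2 :=
      (continuous_const.sub (by fun_prop)).continuousAt.eventually_const_lt
        (lt_of_le_of_ne hxK.1 hx0.1.symm)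
    have e2 : ∀ᶠ z in nhds x, ∀ i, 0 < eval v (Q i) * eval z (Q i) :=
      Filter.eventually_all.2 fun i =>
        (continuous_const.mul (continuous_eval (Q i))).continuousAt.eventually_const_lt (hxpos i)
    filter_upwards [e1, e2] with z h1 h2
    exact ⟨h1.le, fun i => (h2 i).le⟩
  exact ⟨x, hxpos, eval_pderiv_eq_of_isLocalMax F x y _ hFv (hmax.isLocalMax hKn)⟩

open MvPolynomial in
/-- Warren-type bound for sign patterns without zeros: distinct cells contain distinct solutions of
`∇F = y` for all small `y`, where `F` has degree at most `|ι| * k + 2`. -/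
lemma card_strict_patterns {τ ι J : Type*} [Fintype τ] [Fintype ι] [Fintype J]
    (Q : ι → MvPolynomial τ ℝ) (k : ℕ) (hk : ∀ i, (Q i).totalDegree ≤ k) (v : J → τ → ℝ)
    (hv : ∀ j i, eval (v j) (Q i) ≠ 0)
    (hJ : ∀ j j', (∀ i, 0 < eval (v j) (Q i) ↔ 0 < eval (v j') (Q i)) → j = j') :
    Fintype.card J ≤ (Fintype.card τ * (Fintype.card ι * k + 2) + 1) ^ Fintype.card τ := by
  classical
  set R : ℝ := 1 + ∑ j, ∑ i, v j i ^ 2 with hRdef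
  have hR1 : 1 ≤ R := by
    have : 0 ≤ ∑ j, ∑ i, v j i ^ 2 :=
      Finset.sum_nonneg fun j _ => Finset.sum_nonneg fun i _ => sq_nonneg _
    linarith
  have hvR : ∀ j, ∑ i, v j i ^ 2 < R := by
    intro j
    have : ∑ i, v j i ^ 2 ≤ ∑ j, ∑ i, v j i ^ 2 :=
      Finset.single_le_sum (f := fun j => ∑ i, v j i ^ 2)
        (fun j _ => Finset.sum_nonneg fun i _ => sq_nonneg _) (Finset.mem_univ j)
    linarith
  set F : MvPolynomial τ ℝ := (C R - ∑ i, X i ^ 2) * ∏ i, Q i with hF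
  have hFdeg : F.totalDegree ≤ Fintype.card ι * k + 2 := by
    refine (totalDegree_mul _ _).trans ?_
    rw [add_comm]
    refine add_le_add ?_ ?_
    · refine (totalDegree_finsetProd _ _).trans ?_
      exact (Finset.sum_le_card_nsmul _ _ k fun i _ => hk i).trans (by simp)
    · refine (totalDegree_sub _ _).trans (max_le (by simp) ?_)
      exact totalDegree_finsetSum_le fun i _ => by simp
  have hFv : ∀ j, eval (v j) F ≠ 0 := by
    intro j
    have : eval (v j) F = (R - ∑ i, v j i ^ 2) * ∏ i, eval (v j) (Q i) := by simp [hF, map_prod]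
    rw [this]
    exact mul_ne_zero (by linarith [hvR j]) (Finset.prod_ne_zero_iff.2 fun i _ => hv j i)
  obtain ⟨ε, hε, hεF⟩ : ∃ ε : ℝ, 0 < ε ∧ ∀ j, 2 * R * (Fintype.card τ * ε) < |eval (v j) F| := by
    have h1 : ∀ᶠ ε : ℝ in nhdsWithin 0 (Set.Ioi 0),
        ∀ j, 2 * R * (Fintype.card τ * ε) < |eval (v j) F| := by
      refine Filter.Eventually.filter_mono nhdsWithin_le_nhds (Filter.eventually_all.2 fun j => ?_)
      have hc : Continuous fun ε : ℝ => 2 * R * (Fintype.card τ * ε) := by fun_prop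
      exact hc.continuousAt.eventually_lt_const (by simpa using hFv j)
    obtain ⟨ε, h2, h3⟩ := (h1.and self_mem_nhdsWithin).exists
    exact ⟨ε, h3, h2⟩
  refine card_le_of_solutions (fun i => pderiv i F) _
    (fun i => (totalDegree_pderiv_le_totalDegree F i).trans hFdeg) ε hε fun y hy => ?_
  choose x hx1 hx2 using fun j => exists_critical_in_cell Q R hR1 (v j) (hv j) (hvR j) y F hF (by
    refine lt_of_le_of_lt ?_ (hεF j)
    refine mul_le_mul_of_nonneg_left ?_ (by linarith)
    refine (Finset.sum_le_card_nsmul _ _ ε fun i _ => (hy i).le).trans (by simp))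
  refine ⟨x, fun j j' h => hJ j j' fun i => ?_, hx2⟩
  have h1 := hx1 j i
  have h2 := hx1 j' i
  rw [← h] at h2
  constructor
  · intro h3
    exact pos_of_mul_pos_left h2 (pos_of_mul_pos_right h1 h3.le).le
  · intro h3
    exact pos_of_mul_pos_left h1 (pos_of_mul_pos_right h2 h3.le).le

/-- The sign pattern of the family `Q` at `θ`: which of the polynomials are nonnegative there. -/
noncomputable def signPattern {τ ι : Type*} (Q : ι → MvPolynomial τ ℝ) (θ : τ → ℝ) : ι → Prop :=
  fun i => 0 ≤ MvPolynomial.eval θ (Q i)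

open MvPolynomial in
/-- Warren-type bound: `m` polynomials of degree at most `k` in `p` variables have at most
`(p * (m * k + 2) + 1) ^ p` sign patterns. Adding a small constant to all polynomials removes the
zeros at one chosen representative of each pattern. -/
lemma card_signPattern {τ ι : Type*} [Fintype τ] [Fintype ι]
    (Q : ι → MvPolynomial τ ℝ) (k : ℕ) (hk : ∀ i, (Q i).totalDegree ≤ k) :
    Nat.card (Set.range (signPattern Q)) ≤
      (Fintype.card τ * (Fintype.card ι * k + 2) + 1) ^ Fintype.card τ := by
  classical
  rw [Nat.card_eq_fintype_card]
  choose v hv using fun j : Set.range (signPattern Q) => j.2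
  obtain ⟨ε, hε, hεQ⟩ : ∃ ε : ℝ, 0 < ε ∧ ∀ j i, eval (v j) (Q i) < 0 → eval (v j) (Q i) + ε < 0 := by
    have h1 : ∀ᶠ ε : ℝ in nhdsWithin 0 (Set.Ioi 0),
        ∀ j i, eval (v j) (Q i) < 0 → eval (v j) (Q i) + ε < 0 := by
      refine Filter.Eventually.filter_mono nhdsWithin_le_nhds
        (Filter.eventually_all.2 fun j => Filter.eventually_all.2 fun i => ?_)
      by_cases h : eval (v j) (Q i) < 0
      · have hc : Continuous fun ε : ℝ => eval (v j) (Q i) + ε := by fun_prop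
        filter_upwards [hc.continuousAt.eventually_lt_const
          (show eval (v j) (Q i) + 0 < 0 by simpa using h)] with ε h1 _ using h1
      · exact Filter.Eventually.of_forall fun ε h' => absurd h' h
    obtain ⟨ε, h2, h3⟩ := (h1.and self_mem_nhdsWithin).exists
    exact ⟨ε, h3, h2⟩
  have key : ∀ j i, 0 < eval (v j) (Q i + C ε) ↔ (j : ι → Prop) i := by
    intro j i
    rw [← hv j]
    simp only [signPattern, map_add, eval_C]
    constructor
    · intro h
      by_contra h'
      linarith [hεQ j i (not_le.1 h')]
    · intro h
      linarith
  refine card_strict_patterns (fun i => Q i + C ε) k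
    (fun i => (totalDegree_add _ _).trans (max_le (hk i) (by simp))) v (fun j i => ?_)
    fun j j' h => ?_
  · rcases lt_or_ge (eval (v j) (Q i)) 0 with h | h
    · simpa using (hεQ j i h).ne
    · simp only [map_add, eval_C]
      linarith
  · apply Subtype.ext
    funext i
    exact propext (by rw [← key j i, ← key j' i]; exact h i)

/-! ### Piecewise polynomial families -/

/-- The functions `f j` of the parameter `θ` are simultaneously piecewise polynomial of degree at
most `k` with at most `N` pieces; the pieces are the fibres of the labelling `c`. -/
def PiecewisePoly {τ ι : Type} (N k : ℕ) (f : ι → (τ → ℝ) → ℝ) : Prop :=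
  ∃ (I : Type) (_ : Fintype I) (c : (τ → ℝ) → I), Fintype.card I ≤ N ∧
    ∀ a j, ∃ Q : MvPolynomial τ ℝ, Q.totalDegree ≤ k ∧
      ∀ θ, c θ = a → f j θ = MvPolynomial.eval θ Q

/-- The bound of `card_signPattern` for the number of sign patterns of `m` polynomials of degree at
most `k` in `p` variables. -/
def cellBound (p m k : ℕ) : ℕ := (p * (m * k + 2) + 1) ^ p

lemma cellBound_mono {p m m' k k' : ℕ} (hm : m ≤ m') (hk : k ≤ k') :
    cellBound p m k ≤ cellBound p m' k' := by
  unfold cellBound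
  gcongr

/-- The pieces can be subdivided, each into at most `cellBound` parts, so that moreover the sign of
every `f j` is constant on each part. -/
lemma PiecewisePoly.exists_refinement {τ ι : Type} [Fintype τ] [Fintype ι] {N k : ℕ} {f : ι → (τ → ℝ) → ℝ}
    (h : PiecewisePoly N k f) :
    ∃ (I : Type) (_ : Fintype I) (c : (τ → ℝ) → I),
      Fintype.card I ≤ N * cellBound (Fintype.card τ) (Fintype.card ι) k ∧
      ∀ a j, ∃ (Q : MvPolynomial τ ℝ) (s : Prop), Q.totalDegree ≤ k ∧
        ∀ θ, c θ = a → f j θ = MvPolynomial.eval θ Q ∧ (0 ≤ f j θ ↔ s) := by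
  classical
  obtain ⟨I, _, c, hN, hQ⟩ := h
  choose Q hdeg hQ using hQ
  refine ⟨Σ a : I, Set.range (signPattern (Q a)), inferInstance,
    fun θ => ⟨c θ, ⟨_, θ, rfl⟩⟩, ?_, ?_⟩
  · rw [Fintype.card_sigma]
    refine (Finset.sum_le_card_nsmul _ _ _ fun a _ => ?_).trans
      (Nat.mul_le_mul_right (cellBound (Fintype.card τ) (Fintype.card ι) k) hN)
    rw [← Nat.card_eq_fintype_card]
    exact card_signPattern (Q a) k (hdeg a)
  · rintro ⟨a, s⟩ j
    refine ⟨Q a j, (s : ι → Prop) j, hdeg a j, ?_⟩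
    intro θ hθ
    cases hθ
    refine ⟨hQ _ j θ rfl, ?_⟩
    rw [hQ _ j θ rfl]
    rfl

/-- If all sign patterns of `f` are realized, their number is bounded by the number of pieces of the
refinement. -/
lemma PiecewisePoly.two_pow_le {τ ι : Type} [Fintype τ] [Fintype ι] {N k : ℕ}
    {f : ι → (τ → ℝ) → ℝ} (h : PiecewisePoly N k f)
    (hs : ∀ b : ι → Bool, ∃ θ, ∀ j, (0 ≤ f j θ ↔ b j = true)) :
    2 ^ Fintype.card ι ≤ N * cellBound (Fintype.card τ) (Fintype.card ι) k := by
  classical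
  obtain ⟨I, _, c, hN, hI⟩ := h.exists_refinement
  choose θ hθ using hs
  have hinj : Function.Injective fun b => c (θ b) := by
    intro b b' hbb
    funext j
    obtain ⟨Q, s, -, hQ⟩ := hI (c (θ b)) j
    have h1 := (hQ (θ b) rfl).2
    have h2 := (hQ (θ b') hbb.symm).2
    rw [hθ] at h1 h2
    exact Bool.eq_iff_iff.2 (h1.trans h2.symm)
  have := Fintype.card_le_of_injective _ hinj
  simp only [Fintype.card_fun, Fintype.card_bool] at this
  exact this.trans hN

/-! ### Normalized networks -/

/-- Parameters of a normalized network with `D` layers of exactly `W` units: for each unit its `W`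
incoming weights (`Sum.inl`), its bias (`Sum.inr 0`), and the coefficients of ReLU, ReLU² and ReLU³ in
its activation function (`Sum.inr 1`, `Sum.inr 2`, `Sum.inr 3`). Real coefficients absorb the choice
of the activation function into the parameter vector. -/
abbrev Param (D W : ℕ) : Type := Fin D × Fin W × (Fin W ⊕ Fin 4)

/-- The affine part of the layer numbered `ℓ`, counted from `0`. The layer number is reduced modulo
`D`, which has no effect on the layers `ℓ < D` of the network. -/
def preAct {D W : ℕ} [NeZero D] (θ : Param D W → ℝ) (ℓ : ℕ) (z : Fin W → ℝ) (i : Fin W) : ℝ :=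
  (∑ j, θ (Fin.ofNat D ℓ, i, Sum.inl j) * z j) + θ (Fin.ofNat D ℓ, i, Sum.inr 0)

/-- The output of the first `ℓ` layers of the normalized network on the input `x`. -/
def layerState {D W : ℕ} [NeZero D] (θ : Param D W → ℝ) (x : Fin W → ℝ) : ℕ → Fin W → ℝ
  | 0 => x
  | ℓ + 1 => fun i =>
      ∑ k : Fin 3, θ (Fin.ofNat D ℓ, i, Sum.inr k.succ) *
        max (preAct θ ℓ (layerState θ x ℓ) i) 0 ^ ((k : ℕ) + 1)

open MvPolynomial in
lemma piecewisePoly_preAct {D W : ℕ} [NeZero D] {ι : Type} (X : ι → Fin W → ℝ) {N k : ℕ} (ℓ : ℕ)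
    (h : PiecewisePoly N k fun (j : ι × Fin W) (θ : Param D W → ℝ) => layerState θ (X j.1) ℓ j.2) :
    PiecewisePoly N (k + 1) fun (j : ι × Fin W) (θ : Param D W → ℝ) =>
      preAct θ ℓ (layerState θ (X j.1) ℓ) j.2 := by
  obtain ⟨I, _, c, hN, hQ⟩ := h
  refine ⟨I, inferInstance, c, hN, fun a j => ?_⟩
  choose Q hdeg hQ using hQ a
  refine ⟨(∑ i, MvPolynomial.X (Fin.ofNat D ℓ, j.2, Sum.inl i) * Q (j.1, i)) +
    MvPolynomial.X (Fin.ofNat D ℓ, j.2, Sum.inr 0), ?_, ?_⟩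
  · refine (totalDegree_add _ _).trans (max_le ?_ ?_)
    · refine totalDegree_finsetSum_le fun i _ => (totalDegree_mul _ _).trans ?_
      rw [totalDegree_X, add_comm]
      exact Nat.add_le_add_right (hdeg _) 1
    · rw [totalDegree_X]; omega
  · intro θ hθ
    simp only [preAct, map_add, map_sum, map_mul, eval_X]
    congr 1
    exact Finset.sum_congr rfl fun i _ => by rw [← hQ (j.1, i) θ hθ]

open MvPolynomial in
/-- After `ℓ` layers the unit outputs, on all the inputs `X j`, are piecewise polynomial in the
parameters. One layer multiplies the number of pieces by at most `cellBound` (fixing the signs of all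
pre-activations turns every ReLU power into a polynomial), and takes degree `k` to `3 * (k + 1) + 1`,
whence `2 * 3 ^ ℓ - 2`. -/
lemma piecewisePoly_layerState {D W : ℕ} [NeZero D] {ι : Type} [Fintype ι] (X : ι → Fin W → ℝ)
    (ℓ : ℕ) (hℓ : ℓ ≤ D) :
    PiecewisePoly (cellBound (Fintype.card (Param D W)) (Fintype.card ι * W) (2 * 3 ^ D) ^ ℓ)
      (2 * 3 ^ ℓ - 2)
      fun (j : ι × Fin W) (θ : Param D W → ℝ) => layerState θ (X j.1) ℓ j.2 := by
  induction ℓ with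
  | zero =>
    refine ⟨Unit, inferInstance, fun _ => (), by simp, fun _ j => ⟨C (X j.1 j.2), by simp, ?_⟩⟩
    intro θ _
    simp [layerState]
  | succ ℓ ih =>
    obtain ⟨I, _, c, hN, hQ⟩ := (piecewisePoly_preAct X ℓ (ih (by omega))).exists_refinement
    have h3 : 1 ≤ 3 ^ ℓ := Nat.one_le_pow _ _ (by norm_num)
    have h3D : 3 ^ ℓ ≤ 3 ^ D := Nat.pow_le_pow_right (by norm_num) (by omega)
    refine ⟨I, inferInstance, c, hN.trans ?_, fun a j => ?_⟩
    · rw [pow_succ]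
      refine Nat.mul_le_mul_left _ (cellBound_mono (by simp) (by omega))
    · obtain ⟨Q, s, hdeg, hQ⟩ := hQ a j
      by_cases hs : s
      · refine ⟨∑ k : Fin 3, MvPolynomial.X (Fin.ofNat D ℓ, j.2, Sum.inr k.succ) *
          Q ^ ((k : ℕ) + 1), ?_, ?_⟩
        · refine totalDegree_finsetSum_le fun k _ => (totalDegree_mul _ _).trans ?_
          rw [totalDegree_X]
          have h1 := totalDegree_pow Q ((k : ℕ) + 1)
          have h2 : ((k : ℕ) + 1) * Q.totalDegree ≤ 3 * (2 * 3 ^ ℓ - 2 + 1) :=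
            Nat.mul_le_mul (by omega) hdeg
          have h5 : 3 ^ (ℓ + 1) = 3 ^ ℓ * 3 := pow_succ 3 ℓ
          omega
        · intro θ hθ
          obtain ⟨h1, h2⟩ := hQ θ hθ
          simp only [layerState, map_sum, map_mul, map_pow, eval_X, ← h1, max_eq_left (h2.2 hs)]
      · refine ⟨0, by simp, fun θ hθ => ?_⟩
        obtain ⟨h1, h2⟩ := hQ θ hθ
        have h4 : preAct θ ℓ (layerState θ (X j.1) ℓ) j.2 ≤ 0 := by
          by_contra h5
          exact hs (h2.1 (not_le.1 h5).le)
        simp [layerState, max_eq_right h4]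

open MvPolynomial in
/-- If the normalized networks with `D` layers pseudo-shatter the inputs `X j`, with witnesses `y j`,
then `2` to the number of inputs is at most `cellBound ^ D`. The output is the pre-activation of the
unit `i₀` in the last layer, since the last layer is affine. -/
lemma two_pow_le_of_shatter {D W : ℕ} [NeZero D] {ι : Type} [Fintype ι] (X : ι → Fin W → ℝ)
    (y : ι → ℝ) (i₀ : Fin W)
    (hs : ∀ b : ι → Bool, ∃ θ : Param D W → ℝ, ∀ j,
      (y j ≤ preAct θ (D - 1) (layerState θ (X j) (D - 1)) i₀ ↔ b j = true)) :
    2 ^ Fintype.card ι ≤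
      cellBound (Fintype.card (Param D W)) (Fintype.card ι * W) (2 * 3 ^ D) ^ D := by
  have hD : 0 < D := Nat.pos_of_ne_zero (NeZero.ne D)
  have hpp := piecewisePoly_preAct X (D - 1) (piecewisePoly_layerState X (D - 1) (Nat.sub_le _ _))
  have hout : PiecewisePoly
      (cellBound (Fintype.card (Param D W)) (Fintype.card ι * W) (2 * 3 ^ D) ^ (D - 1))
      (2 * 3 ^ (D - 1) - 2 + 1)
      fun (j : ι) (θ : Param D W → ℝ) =>
        preAct θ (D - 1) (layerState θ (X j) (D - 1)) i₀ - y j := by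
    obtain ⟨I, _, c, hN, hQ⟩ := hpp
    refine ⟨I, inferInstance, c, hN, fun a j => ?_⟩
    obtain ⟨Q, hdeg, hQ⟩ := hQ a (j, i₀)
    refine ⟨Q - C (y j), (totalDegree_sub_C_le _ _).trans hdeg, fun θ hθ => ?_⟩
    simp only [map_sub, eval_C, ← hQ θ hθ]
  refine (hout.two_pow_le fun b => ?_).trans ?_
  · obtain ⟨θ, hθ⟩ := hs b
    exact ⟨θ, fun j => by rw [sub_nonneg]; exact hθ j⟩
  · have h3 : 1 ≤ 3 ^ (D - 1) := Nat.one_le_pow _ _ (by norm_num)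
    have h3D : 3 ^ (D - 1) ≤ 3 ^ D := Nat.pow_le_pow_right (by norm_num) (by omega)
    conv_rhs => rw [← Nat.sub_add_cancel hD, pow_succ]
    rw [Nat.sub_add_cancel hD]
    refine Nat.mul_le_mul_left _ (cellBound_mono ?_ (by omega))
    exact Nat.le_mul_of_pos_right _ i₀.pos

lemma sum_dite_lt {m W : ℕ} (h : m ≤ W) (g : Fin m → ℝ) :
    ∑ j : Fin W, (if hj : (j : ℕ) < m then g ⟨j, hj⟩ else 0) = ∑ j, g j := by
  obtain ⟨r, rfl⟩ := Nat.exists_eq_add_of_le h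
  simp [Fin.sum_univ_add]

/-- The input vector `x`, extended by zeros to length `W`. -/
def padInput {d : ℕ} (W : ℕ) (x : Fin d → ℝ) : Fin W → ℝ :=
  fun i => if h : (i : ℕ) < d then x ⟨i, h⟩ else 0

/-- Every network of depth `D` and width `W` is a normalized network: missing units and weights are
filled with zeros, and the coefficient vector of an activation function is a unit vector. -/
lemma ImplementedBy.exists_param {d D W : ℕ} [NeZero D] (hW : 0 < W) {f : (Fin d → ℝ) → ℝ}
    (hf : ImplementedBy d f D W {ReLUpow 1, ReLUpow 2, ReLUpow 3}) :
    ∃ θ : Param D W → ℝ, ∀ x,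
      f x = preAct θ (D - 1) (layerState θ (padInput W x) (D - 1)) ⟨0, hW⟩ := by
  classical
  obtain ⟨n, h0, hD, hn, A, b, ρ, hρ, hid, hf⟩ := hf
  subst h0
  have hDpos : 0 < D := Nat.pos_of_ne_zero (NeZero.ne D)
  have hρ' : ∀ ℓ i, ∃ k : Fin 3, ℓ + 1 < D → ρ ℓ i = ReLUpow ((k : ℕ) + 1) := by
    intro ℓ i
    by_cases h : ℓ + 1 < D
    · rcases hρ ℓ h i with h1 | h1 | h1
      · exact ⟨0, fun _ => h1⟩
      · exact ⟨1, fun _ => h1⟩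
      · exact ⟨2, fun _ => h1⟩
    · exact ⟨0, fun h' => absurd h' h⟩
  choose κ hκ using hρ'
  let θ : Param D W → ℝ := fun q =>
    if hi : (q.2.1 : ℕ) < n (q.1 + 1) then
      Sum.elim (fun j : Fin W => if hj : (j : ℕ) < n q.1 then A q.1 ⟨q.2.1, hi⟩ ⟨j, hj⟩ else 0)
        (Fin.cases (b q.1 ⟨q.2.1, hi⟩)
          fun k : Fin 3 => if κ q.1 ⟨q.2.1, hi⟩ = k then 1 else 0) q.2.2
    else 0
  have hofNat : ∀ ℓ, ℓ < D → ((Fin.ofNat D ℓ : Fin D) : ℕ) = ℓ := fun ℓ h => Nat.mod_eq_of_lt h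
  have hθ : ∀ ℓ, ℓ < D → ∀ (i : Fin W) (s : Fin W ⊕ Fin 4), θ (Fin.ofNat D ℓ, i, s) =
      if hi : (i : ℕ) < n (ℓ + 1) then
        Sum.elim (fun j : Fin W => if hj : (j : ℕ) < n ℓ then A ℓ ⟨i, hi⟩ ⟨j, hj⟩ else 0)
          (Fin.cases (b ℓ ⟨i, hi⟩) fun k : Fin 3 => if κ ℓ ⟨i, hi⟩ = k then 1 else 0) s
      else 0 := by
    intro ℓ hℓ i s
    have : Fin.ofNat D ℓ = ⟨ℓ, hℓ⟩ := Fin.ext (hofNat ℓ hℓ)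
    rw [this]
  have hpre : ∀ (x : Fin (n 0) → ℝ) ℓ, ℓ < D → ∀ z : Fin W → ℝ,
      (∀ i, z i = if hi : (i : ℕ) < n ℓ then evalNN n A b ρ x ℓ ⟨i, hi⟩ else 0) →
      ∀ (i : Fin W) (hi : (i : ℕ) < n (ℓ + 1)),
      preAct θ ℓ z i = (A ℓ).mulVec (evalNN n A b ρ x ℓ) ⟨i, hi⟩ + b ℓ ⟨i, hi⟩ := by
    intro x ℓ hℓ z hz i hi
    unfold preAct
    congr 1
    · rw [Matrix.mulVec, dotProduct, ← sum_dite_lt (hn ℓ hℓ.le)]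
      refine Finset.sum_congr rfl fun j _ => ?_
      rw [hθ ℓ hℓ, hz]
      by_cases hj : (j : ℕ) < n ℓ <;> simp [hi, hj]
    · rw [hθ ℓ hℓ]
      simp [hi]
  -- The missing units `i ≥ n ℓ` output `0` because their activation coefficients vanish.
  have hstate : ∀ (x : Fin (n 0) → ℝ) ℓ, ℓ < D → ∀ i, layerState θ (padInput W x) ℓ i =
      if hi : (i : ℕ) < n ℓ then evalNN n A b ρ x ℓ ⟨i, hi⟩ else 0 := by
    intro x ℓ
    induction ℓ with
    | zero => intro _ i; rfl
    | succ ℓ ih =>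
      intro hℓ i
      have ih' := ih (by omega)
      simp only [layerState]
      by_cases hi : (i : ℕ) < n (ℓ + 1)
      · rw [hpre x ℓ (by omega) _ ih' i hi]
        simp only [hθ ℓ (by omega), hi, dite_true, evalNN, hκ ℓ ⟨i, hi⟩ hℓ]
        simp [ReLUpow]
      · rw [dif_neg hi]
        refine Finset.sum_eq_zero fun k _ => ?_
        rw [hθ ℓ (by omega), dif_neg hi, zero_mul]
  refine ⟨θ, fun x => ?_⟩
  obtain ⟨D', rfl⟩ : ∃ D', D = D' + 1 := ⟨D - 1, by omega⟩
  have h1 : ((⟨0, hW⟩ : Fin W) : ℕ) < n (D' + 1) := by simp [hD]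
  rw [Nat.add_sub_cancel, hpre x D' (by omega) _ (hstate x D' (by omega)) _ h1, hf]
  simp only [evalNN, hid D' rfl]
  rfl

/-! ### The numerical estimate -/

/-- Solving `2 ^ n ≤ cellBound ^ D` for `n`. Taking logarithms gives `n / 2 ≤ M (7 L + log n)` with
`M = 5 D² W²` and `L = D + log W`; the term `log n` is then absorbed into the left-hand side. -/
lemma numeric_bound {D W n : ℕ} (hD : 0 < D) (hW : 0 < W)
    (h : 2 ^ n ≤ cellBound (Fintype.card (Param D W)) (n * W) (2 * 3 ^ D) ^ D) :
    (n : ℝ) ≤ 250 * (D : ℝ) ^ 2 * (W : ℝ) ^ 2 * ((D : ℝ) + Real.log W) := by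
  have hD1 : (1 : ℝ) ≤ D := by exact_mod_cast hD
  have hW1 : (1 : ℝ) ≤ W := by exact_mod_cast hW
  have hlW : 0 ≤ Real.log W := Real.log_nonneg hW1
  rcases Nat.eq_zero_or_pos n with rfl | hn
  · simp only [Nat.cast_zero]; positivity
  have hn1 : (1 : ℝ) ≤ n := by exact_mod_cast hn
  have hp : Fintype.card (Param D W) = D * (W * (W + 4)) := by simp [Param]
  set p := Fintype.card (Param D W) with hpdef
  have hp5 : p ≤ 5 * (D * W ^ 2) := by
    have h2 : W * (W + 4) ≤ 5 * W ^ 2 := by nlinarith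
    rw [hp]
    calc D * (W * (W + 4)) ≤ D * (5 * W ^ 2) := Nat.mul_le_mul_left _ h2
      _ = _ := by ring
  have hbase : p * (n * W * (2 * 3 ^ D) + 2) + 1 ≤ 21 * (9 ^ D * (W ^ 3 * n)) := by
    have hD3 : D ≤ 3 ^ D := (Nat.lt_pow_self (by norm_num)).le
    have h1 : 1 ≤ n * W * 3 ^ D := Nat.succ_le_of_lt (by positivity)
    have h2 : 1 ≤ D * W ^ 2 * (n * W * 3 ^ D) := Nat.succ_le_of_lt (by positivity)
    calc p * (n * W * (2 * 3 ^ D) + 2) + 1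
        ≤ 5 * (D * W ^ 2) * (4 * (n * W * 3 ^ D)) + D * W ^ 2 * (n * W * 3 ^ D) := by
          refine add_le_add (Nat.mul_le_mul hp5 ?_) h2
          have : n * W * (2 * 3 ^ D) = 2 * (n * W * 3 ^ D) := by ring
          omega
      _ = 21 * (D * (3 ^ D * (W ^ 3 * n))) := by ring
      _ ≤ 21 * (3 ^ D * (3 ^ D * (W ^ 3 * n))) := by gcongr
      _ = 21 * (9 ^ D * (W ^ 3 * n)) := by
          rw [← mul_assoc (3 ^ D), ← mul_pow]; norm_num
  have h' : (2 : ℝ) ^ n ≤ (21 * (9 ^ D * ((W : ℝ) ^ 3 * n))) ^ (p * D) := by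
    have : 2 ^ n ≤ (21 * (9 ^ D * (W ^ 3 * n))) ^ (p * D) := by
      refine h.trans ?_
      rw [cellBound, ← pow_mul]
      exact Nat.pow_le_pow_left hbase _
    exact_mod_cast this
  have hlog := Real.log_le_log (by positivity) h'
  rw [Real.log_pow, Real.log_pow, Real.log_mul (by norm_num) (by positivity),
    Real.log_mul (by positivity) (by positivity), Real.log_mul (by positivity) (by positivity),
    Real.log_pow, Real.log_pow] at hlog
  have hl2 : (1 / 2 : ℝ) ≤ Real.log 2 := by linarith [Real.log_two_gt_d9]
  have hl2' : Real.log 2 ≤ 0.7 := by linarith [Real.log_two_lt_d9]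
  have hl32 : Real.log 32 ≤ 3.5 := by
    rw [show (32 : ℝ) = 2 ^ 5 by norm_num, Real.log_pow]; push_cast; linarith
  have hl21 : Real.log 21 ≤ 3.5 := (Real.log_le_log (by norm_num) (by norm_num)).trans hl32
  have hl20 : Real.log 20 ≤ 3.5 := (Real.log_le_log (by norm_num) (by norm_num)).trans hl32
  have hl9 : Real.log 9 ≤ 2.8 := by
    refine (Real.log_le_log (by norm_num) (by norm_num : (9 : ℝ) ≤ 2 ^ 4)).trans ?_
    rw [Real.log_pow]; push_cast; linarith
  set L : ℝ := (D : ℝ) + Real.log W with hL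
  have hL1 : 1 ≤ L := by linarith
  set M : ℝ := 5 * ((D : ℝ) ^ 2 * (W : ℝ) ^ 2) with hM
  have hMpos : 0 < M := by positivity
  have hpM : ((p * D : ℕ) : ℝ) ≤ M := by
    have : p * D ≤ 5 * (D ^ 2 * W ^ 2) := by nlinarith
    rw [hM]; exact_mod_cast this
  have hln : 0 ≤ Real.log n := Real.log_nonneg hn1
  have hstep : (n : ℝ) * (1 / 2) ≤ M * (7 * L + Real.log n) := by
    calc (n : ℝ) * (1 / 2) ≤ n * Real.log 2 := by gcongr
      _ ≤ _ := hlog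
      _ ≤ ((p * D : ℕ) : ℝ) * (7 * L + Real.log n) := by
          refine mul_le_mul_of_nonneg_left ?_ (by positivity)
          push_cast
          nlinarith
      _ ≤ _ := by
          refine mul_le_mul_of_nonneg_right hpM (by linarith)
  -- The factor `4 * M` is chosen so that `M * log n` costs only half of the left-hand side.
  have hlogn : Real.log n ≤ n / (4 * M) + Real.log (4 * M) := by
    have h1 : Real.log n = Real.log (n / (4 * M)) + Real.log (4 * M) := by
      rw [← Real.log_mul (by positivity) (by positivity)]
      congr 1
      field_simp
    have h2 := Real.log_le_sub_one_of_pos (show 0 < (n : ℝ) / (4 * M) by positivity)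
    linarith
  have hlogM : Real.log (4 * M) ≤ 5.5 * L := by
    have : 4 * M = 20 * ((D : ℝ) ^ 2 * (W : ℝ) ^ 2) := by rw [hM]; ring
    rw [this, Real.log_mul (by norm_num) (by positivity), Real.log_mul (by positivity)
      (by positivity), Real.log_pow, Real.log_pow]
    have := Real.log_le_sub_one_of_pos (show (0 : ℝ) < D by linarith)
    push_cast
    linarith
  have hfin : (n : ℝ) * (1 / 2) ≤ 12.5 * (M * L) + n / 4 := by
    calc (n : ℝ) * (1 / 2) ≤ M * (7 * L + Real.log n) := hstep
      _ ≤ M * (7 * L + (n / (4 * M) + 5.5 * L)) := by gcongr; linarith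
      _ = _ := by field_simp; ring
  calc (n : ℝ) ≤ 50 * (M * L) := by linarith
    _ = _ := by rw [hM]; ring

/-- Proposition 5.11 of the paper: there is an absolute constant `c > 0` such that, for
all `d, D, W ∈ ℕ⁺` with `d ≤ W`, the class of functions `ℝ^d → ℝ` implemented by neural
networks of depth `D` and width `W` with activations in `{ReLU, ReLU², ReLU³}` has
pseudo-dimension at most `c · D² W² (D + log W)`. -/
theorem stmt_6 :
    ∃ c : ℝ, 0 < c ∧
      ∀ d D W : ℕ, 0 < d → 0 < D → 0 < W → d ≤ W →
        ((pdim {f : (Fin d → ℝ) → ℝ |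
            ImplementedBy d f D W {ReLUpow 1, ReLUpow 2, ReLUpow 3}} : ℕ∞) : ℝ≥0∞)
          ≤ ENNReal.ofReal (c * (D : ℝ) ^ 2 * (W : ℝ) ^ 2 * ((D : ℝ) + Real.log W)) := by
  refine ⟨250, by norm_num, fun d D W _ hD hW _ => ?_⟩
  have : NeZero D := ⟨hD.ne'⟩
  have hlW : 0 ≤ Real.log W := Real.log_nonneg (by exact_mod_cast hW)
  set r : ℝ := 250 * (D : ℝ) ^ 2 * (W : ℝ) ^ 2 * ((D : ℝ) + Real.log W) with hr
  have hr0 : 0 ≤ r := by positivity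
  have hle : pdim {f : (Fin d → ℝ) → ℝ |
      ImplementedBy d f D W {ReLUpow 1, ReLUpow 2, ReLUpow 3}} ≤ ((⌊r⌋₊ : ℕ) : ℕ∞) := by
    refine iSup₂_le fun s hs => ?_
    obtain ⟨y, hy⟩ := hs
    refine Nat.cast_le.2 (Nat.le_floor (numeric_bound hD hW ?_))
    rw [← Fintype.card_coe s]
    refine two_pow_le_of_shatter (fun j : s => padInput W j.1) (fun j => y j) ⟨0, hW⟩ fun b => ?_
    obtain ⟨u, hu, hub⟩ := hy fun x => if h : x ∈ s then b ⟨x, h⟩ else false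
    obtain ⟨θ, hθ⟩ := ImplementedBy.exists_param hW hu
    refine ⟨θ, fun j => ?_⟩
    rw [← hθ, hub j j.2, dif_pos j.2]
  calc _ ≤ (((⌊r⌋₊ : ℕ) : ℕ∞) : ℝ≥0∞) := ENat.toENNReal_le.2 hle
    _ = ENNReal.ofReal (⌊r⌋₊ : ℕ) := by rw [ENat.toENNReal_coe, ENNReal.ofReal_natCast]
    _ ≤ ENNReal.ofReal r := ENNReal.ofReal_le_ofReal (Nat.floor_le hr0)
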